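/- With G, F, ι, Θ as in the context, let f = Σ_{i≥0} g_i t^i ∈ Θ. If f is rational over F, i.e. there exist polynomials q, p ∈ F[t] with q ≠ 0 and q·f = p, then there exist an integer n ≥ 1, an index i₀ ∈ ℕ, and a sequence (h_i)_{i∈ℕ} of elements of G with h_{i+n} = h_i for all i, such that g_{i+n} = ι(h_i)·g_i in F for all i > i₀. -/

import Mathlib

namespace EPaux

open Polynomial

noncomputable section

/-- The sequence `n ↦ p(n) lⁿ`. -/
def tm {K : Type*} [Field K] (l : Kˣ) (p : K[X]) : ℕ → K :=
  fun n => p.eval (n : K) * (l : K) ^ n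

/-- Exponential polynomials with bases in `W`. -/
def EP {K : Type*} [Field K] (W : Set Kˣ) : Submodule K (ℕ → K) :=
  Submodule.span K {u | ∃ l ∈ W, ∃ p : K[X], u = tm l p}

/-- The shift. -/
def sh (K : Type*) [Field K] : Module.End K (ℕ → K) where
  toFun u := fun n => u (n + 1)
  map_add' _ _ := rfl
  map_smul' _ _ := rfl

variable {K : Type*} [Field K]

lemma tm_mem {W : Set Kˣ} {l : Kˣ} (hl : l ∈ W) (p : K[X]) : tm l p ∈ EP W :=
  Submodule.subset_span ⟨l, hl, p, rfl⟩

lemma EP_mono {W W' : Set Kˣ} (h : W ⊆ W') : EP W ≤ EP W' := by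
  apply Submodule.span_mono
  rintro _ ⟨l, hl, p, rfl⟩
  exact ⟨l, h hl, p, rfl⟩

/-- `p ↦ μ p(X+1) - l p`. -/
def LL (m l : K) : K[X] →ₗ[K] K[X] :=
  m • (Polynomial.taylor (1 : K)) - l • LinearMap.id

lemma LL_pow (m l : K) (k : ℕ) : LL m l (X ^ k) =
    m • (∑ i ∈ Finset.range k, (k.choose i : K) • X ^ i) + (m - l) • X ^ k := by
  have : (taylor (1:K)) (X ^ k : K[X]) = (X + 1) ^ k := by
    simp [taylor_apply]
  simp only [LL, LinearMap.sub_apply, LinearMap.smul_apply, this, LinearMap.id_apply]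
  rw [add_pow, Finset.sum_range_succ]
  simp only [one_pow, mul_one, Nat.choose_self, Nat.cast_one]
  rw [smul_add, sub_smul, add_sub_assoc]
  congr 2
  apply Finset.sum_congr rfl
  intro i _
  rw [mul_comm, Polynomial.smul_eq_C_mul]
  simp

lemma LL_surj [CharZero K] (m l : Kˣ) : LinearMap.range (LL (m : K) (l : K)) = ⊤ := by
  have key : ∀ k : ℕ, (X ^ k : K[X]) ∈ LinearMap.range (LL (m : K) (l : K)) := by
    intro k
    induction k using Nat.strong_induction_on with
    | _ k ih =>
      by_cases h : (m : K) = l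
      · have h1 := LL_pow (m : K) l (k + 1)
        rw [Finset.sum_range_succ, h, sub_self, zero_smul, add_zero, smul_add] at h1
        have h2 : (X ^ k : K[X]) = ((l : K) * ((k : K) + 1))⁻¹ • (LL (m : K) l (X ^ (k+1)) -
            (l : K) • ∑ i ∈ Finset.range k, (((k+1).choose i : ℕ) : K) • X ^ i) := by
          rw [h, h1, add_sub_cancel_left, smul_smul, smul_smul]
          have : (k : K) + 1 ≠ 0 := by exact_mod_cast Nat.succ_ne_zero k
          have hl := l.ne_zero
          rw [Nat.choose_succ_self_right]
          push_cast
          rw [mul_assoc, inv_mul_cancel₀ (mul_ne_zero hl this), one_smul]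
        rw [h2]
        refine Submodule.smul_mem _ _ (Submodule.sub_mem _ ⟨_, rfl⟩ (Submodule.smul_mem _ _ ?_))
        exact Submodule.sum_mem _ fun i hi => Submodule.smul_mem _ _ (ih i (Finset.mem_range.1 hi))
      · have h1 := LL_pow (m : K) l k
        have h2 : (X ^ k : K[X]) = ((m : K) - l)⁻¹ • (LL (m : K) l (X ^ k) -
            (m : K) • ∑ i ∈ Finset.range k, ((k.choose i : ℕ) : K) • X ^ i) := by
          rw [h1, add_sub_cancel_left, smul_smul, inv_mul_cancel₀ (sub_ne_zero.2 h), one_smul]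
        rw [h2]
        refine Submodule.smul_mem _ _ (Submodule.sub_mem _ ⟨_, rfl⟩ (Submodule.smul_mem _ _ ?_))
        exact Submodule.sum_mem _ fun i hi => Submodule.smul_mem _ _ (ih i (Finset.mem_range.1 hi))
  rw [eq_top_iff]
  intro p _
  rw [p.as_sum_range_C_mul_X_pow]
  refine Submodule.sum_mem _ fun i _ => ?_
  rw [← Polynomial.smul_eq_C_mul]
  exact Submodule.smul_mem _ _ (key i)

lemma sh_tm (m l : Kˣ) (p : K[X]) :
    (sh K - (l : K) • (1 : Module.End K (ℕ → K))) (tm m p) = tm m (LL (m : K) l p) := by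
  ext n
  simp [sh, tm, LL, taylor_apply, eval_comp]
  ring

lemma sub_surj [CharZero K] (l : Kˣ) {v : ℕ → K} (hv : v ∈ EP (Set.univ : Set Kˣ)) :
    ∃ u ∈ EP (Set.univ : Set Kˣ), (sh K - (l : K) • (1 : Module.End K (ℕ → K))) u = v := by
  unfold EP at hv
  induction hv using Submodule.span_induction with
  | mem x hx =>
    obtain ⟨m, -, p, rfl⟩ := hx
    have : p ∈ LinearMap.range (LL (m : K) (l : K)) := by rw [LL_surj]; trivial
    obtain ⟨r, hr⟩ := this
    exact ⟨tm m r, tm_mem (Set.mem_univ _) r, by rw [sh_tm, hr]⟩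
  | zero => exact ⟨0, Submodule.zero_mem _, map_zero _⟩
  | add x y _ _ hx hy =>
    obtain ⟨a, ha, rfl⟩ := hx
    obtain ⟨b, hb, rfl⟩ := hy
    exact ⟨a + b, Submodule.add_mem _ ha hb, map_add _ _ _⟩
  | smul c x _ hx =>
    obtain ⟨a, ha, rfl⟩ := hx
    exact ⟨c • a, Submodule.smul_mem _ _ ha, map_smul _ _ _⟩

lemma mem_of_sub_mem [CharZero K] (l : Kˣ) {u : ℕ → K}
    (h : (sh K - (l : K) • (1 : Module.End K (ℕ → K))) u ∈ EP (Set.univ : Set Kˣ)) :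
    u ∈ EP (Set.univ : Set Kˣ) := by
  obtain ⟨w, hw, hw'⟩ := sub_surj l h
  have h1 : (sh K - (l : K) • (1 : Module.End K (ℕ → K))) (u - w) = 0 := by
    rw [map_sub, hw', sub_self]
  have h2 : u - w = tm l (C ((u - w) 0)) := by
    ext n
    induction n with
    | zero => simp [tm]
    | succ n ih =>
      have := congrFun h1 n
      simp only [sh, LinearMap.sub_apply, LinearMap.coe_mk, AddHom.coe_mk, LinearMap.smul_apply,
        Module.End.one_apply, Pi.zero_apply] at this
      have h3 : (u - w) (n + 1) = l * (u - w) n := by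
        have := sub_eq_zero.1 this
        simpa using this
      rw [h3, ih]
      simp [tm, pow_succ]
      ring
  have h3 : u = tm l (C ((u - w) 0)) + w := by rw [← h2]; simp
  rw [h3]
  exact Submodule.add_mem _ (tm_mem (Set.mem_univ _) _) hw

lemma mem_of_prod [CharZero K] (s : Multiset K) (hs : ∀ l ∈ s, l ≠ 0) :
    ∀ u : ℕ → K, aeval (sh K) (s.map fun l => X - C l).prod u = 0 →
      u ∈ EP (Set.univ : Set Kˣ) := by
  induction s using Multiset.induction_on with
  | empty => intro u hu; simp at hu; rw [hu]; exact Submodule.zero_mem _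
  | cons a s ih =>
    intro u hu
    rw [Multiset.map_cons, Multiset.prod_cons, mul_comm, map_mul, Module.End.mul_apply] at hu
    have := ih (fun l hl => hs l (Multiset.mem_cons_of_mem hl)) _ hu
    apply mem_of_sub_mem (Units.mk0 a (hs a (Multiset.mem_cons_self a s)))
    convert this using 2
    simp [Algebra.algebraMap_eq_smul_one]

lemma mem_of_rec [CharZero K] [IsAlgClosed K] (D : ℕ) (a : ℕ → K) (ha : a 0 ≠ 0) (u : ℕ → K)
    (h : ∀ n, ∑ i ∈ Finset.range (D + 1), a i * u (n + i) = 0) :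
    u ∈ EP (Set.univ : Set Kˣ) := by
  set Q : K[X] := ∑ i ∈ Finset.range (D + 1), C (a i) * X ^ i with hQ
  have hQ0 : Q.eval 0 = a 0 := by
    rw [hQ, eval_finsetSum, Finset.sum_eq_single 0] <;> simp +contextual
  have hQne : Q ≠ 0 := by
    intro h; rw [h] at hQ0; simp at hQ0; exact ha hQ0.symm
  have hpow : ∀ i n, ((sh K) ^ i) u n = u (n + i) := by
    intro i
    induction i with
    | zero => intro n; rfl
    | succ i ih =>
      intro n
      rw [pow_succ', Module.End.mul_apply]
      show ((sh K) ^ i) u (n + 1) = _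
      rw [ih]; congr 1; ring
  have hz : aeval (sh K) Q u = 0 := by
    ext n
    rw [hQ, map_sum]
    simp only [map_mul, aeval_C, map_pow, aeval_X, LinearMap.sum_apply, Module.End.mul_apply,
      Module.algebraMap_end_apply, Finset.sum_apply, Pi.smul_apply, hpow, smul_eq_mul]
    exact h n
  have hsp := (IsAlgClosed.splits Q).eq_prod_roots
  rw [hsp, map_mul, aeval_C, Module.End.mul_apply, Module.algebraMap_end_apply] at hz
  have hz' := (smul_eq_zero.1 hz).resolve_left (leadingCoeff_ne_zero.2 hQne)
  refine mem_of_prod Q.roots ?_ u hz'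
  rintro l hl rfl
  have := (mem_roots'.1 hl).2
  rw [IsRoot, hQ0] at this
  exact ha this

lemma exists_finset {u : ℕ → K} (hu : u ∈ EP (Set.univ : Set Kˣ)) :
    ∃ s : Finset Kˣ, u ∈ EP (s : Set Kˣ) := by
  classical
  unfold EP at hu
  induction hu using Submodule.span_induction with
  | mem x hx =>
    obtain ⟨m, -, p, rfl⟩ := hx
    exact ⟨{m}, tm_mem (by simp) p⟩
  | zero => exact ⟨∅, Submodule.zero_mem _⟩
  | add x y _ _ hx hy =>
    obtain ⟨a, ha⟩ := hx
    obtain ⟨b, hb⟩ := hy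
    exact ⟨a ∪ b, Submodule.add_mem _ (EP_mono (by simp) ha) (EP_mono (by simp) hb)⟩
  | smul c x _ hx =>
    obtain ⟨a, ha⟩ := hx
    exact ⟨a, Submodule.smul_mem _ _ ha⟩

lemma prog {W W' : Set Kˣ} (N : ℕ) (hW : ∀ l ∈ W, l ^ N ∈ W') (b : ℕ) {u : ℕ → K}
    (hu : u ∈ EP W) : (fun n => u (b + N * n)) ∈ EP W' := by
  unfold EP at hu
  induction hu using Submodule.span_induction with
  | mem x hx =>
    obtain ⟨m, hm, p, rfl⟩ := hx
    convert tm_mem (hW m hm) (C ((m : K) ^ b) * p.comp (C (b : K) + C (N : K) * X)) using 1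
    ext n
    simp [tm, eval_comp, pow_add, pow_mul]
    ring
  | zero => exact Submodule.zero_mem _
  | add x y _ _ hx hy => exact Submodule.add_mem _ hx hy
  | smul c x _ hx => exact Submodule.smul_mem _ c hx

/-- Evaluation of formal exponential polynomials. -/
def E (M : Subgroup Kˣ) : MonoidAlgebra K[X] M →+* (ℕ → K) :=
  MonoidAlgebra.liftNCRingHom
    (RingHom.pi fun n : ℕ => Polynomial.evalRingHom (n : K))
    { toFun := fun l n => ((l : Kˣ) : K) ^ n
      map_one' := by ext; simp
      map_mul' := by intro x y; ext; simp [mul_pow] }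
    (fun _ _ => Commute.all _ _)

lemma E_single (M : Subgroup Kˣ) (l : M) (p : K[X]) :
    E M (MonoidAlgebra.single l p) = tm (l : Kˣ) p := by
  ext n
  simp [E, tm]
  try rfl

lemma E_sum (M : Subgroup Kˣ) (P : MonoidAlgebra K[X] M) :
    E M P = ∑ l ∈ P.coeff.support, tm (l : Kˣ) (P.coeff l) := by
  conv_lhs => rw [← MonoidAlgebra.sum_coeff_single P]
  rw [Finsupp.sum, map_sum]
  exact Finset.sum_congr rfl fun l _ => E_single M l _

lemma mem_range_E (M : Subgroup Kˣ) {u : ℕ → K} (hu : u ∈ EP (M : Set Kˣ)) :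
    ∃ P, E M P = u := by
  unfold EP at hu
  induction hu using Submodule.span_induction with
  | mem x hx =>
    obtain ⟨m, hm, p, rfl⟩ := hx
    exact ⟨MonoidAlgebra.single ⟨m, hm⟩ p, E_single _ _ _⟩
  | zero => exact ⟨0, map_zero _⟩
  | add x y _ _ hx hy =>
    obtain ⟨a, rfl⟩ := hx
    obtain ⟨b, rfl⟩ := hy
    exact ⟨a + b, map_add _ _ _⟩
  | smul c x _ hx =>
    obtain ⟨a, rfl⟩ := hx
    refine ⟨MonoidAlgebra.single 1 (C c) * a, ?_⟩
    rw [map_mul, E_single]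
    ext n
    simp [tm]

lemma tm_mem_gen (l : Kˣ) (p : K[X]) : tm l p ∈ (sh K).maxGenEigenspace (l : K) := by
  have hadd : ∀ p q : K[X], tm l (p + q) = tm l p + tm l q := by
    intro p q; ext n; simp [tm, add_mul]
  have hsmul : ∀ (c : K) (q : K[X]), tm l (c • q) = c • tm l q := by
    intro p q; ext n; simp [tm, mul_assoc]
  let T : K[X] →ₗ[K] (ℕ → K) := { toFun := tm l, map_add' := hadd, map_smul' := hsmul }
  let V := ((sh K).maxGenEigenspace (l : K)).comap T
  suffices h : ∀ k : ℕ, (X ^ k : K[X]) ∈ V by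
    have : p ∈ V := by
      rw [p.as_sum_range_C_mul_X_pow]
      refine Submodule.sum_mem _ fun i _ => ?_
      rw [← Polynomial.smul_eq_C_mul]
      exact Submodule.smul_mem _ _ (h i)
    exact this
  intro k
  induction k using Nat.strong_induction_on with
  | _ k ih =>
    have h1 : (LL (l : K) l (X ^ k)) ∈ V := by
      rw [LL_pow, sub_self, zero_smul, add_zero]
      refine Submodule.smul_mem _ _ ?_
      exact Submodule.sum_mem _ fun i hi => Submodule.smul_mem _ _ (ih i (Finset.mem_range.1 hi))
    have h2 : tm l (LL (l : K) l (X ^ k)) ∈ (sh K).maxGenEigenspace (l : K) := h1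
    rw [← sh_tm, Module.End.mem_maxGenEigenspace] at h2
    obtain ⟨j, hj⟩ := h2
    show tm l (X ^ k) ∈ (sh K).maxGenEigenspace (l : K)
    rw [Module.End.mem_maxGenEigenspace]
    exact ⟨j + 1, by rw [pow_succ, Module.End.mul_apply, hj]⟩

lemma tm_eq_zero [CharZero K] (l : Kˣ) (p : K[X]) (h : tm l p = 0) : p = 0 := by
  apply Polynomial.eq_zero_of_infinite_isRoot
  apply Set.Infinite.mono (s := Set.range (fun n : ℕ => (n : K)))
  · rintro _ ⟨n, rfl⟩
    have := congrFun h n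
    simpa [tm] using this
  · exact Set.infinite_range_of_injective Nat.cast_injective

lemma E_inj [CharZero K] (M : Subgroup Kˣ) : Function.Injective (E M) := by
  classical
  rw [injective_iff_map_eq_zero]
  intro P hP
  rw [E_sum] at hP
  have hind := (sh K).independent_genEigenspace ⊤
  have hind2 : iSupIndep (fun l : M => (sh K).maxGenEigenspace ((l : Kˣ) : K)) :=
    hind.comp (f := fun l : M => ((l : Kˣ) : K))
      (fun a b h => Subtype.ext (Units.ext h))
  rw [iSupIndep_iff_finsetSum_eq_zero_imp_eq_zero] at hind2
  have := hind2 P.coeff.support (fun l => tm (l : Kˣ) (P.coeff l))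
    (fun l _ => tm_mem_gen _ _) hP
  by_contra hne
  have : P.coeff = 0 := by
    ext1 l
    by_contra hl
    exact hl (tm_eq_zero _ _ (this l (Finsupp.mem_support_iff.2 hl)))
  exact hne (MonoidAlgebra.coeff_eq_zero.1 this)

lemma torsion_exp (A : Type*) [CommGroup A] [Group.FG A] :
    ∃ N : ℕ, 1 ≤ N ∧ ∀ x : A, IsOfFinOrder x → x ^ N = 1 := by
  have : Module.Finite ℤ (Additive A) := Module.Finite.iff_addGroup_fg.2 inferInstance
  have hn : IsNoetherian ℤ (Additive A) := inferInstance
  have hfg : (CommGroup.torsion A).FG := by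
    rw [Subgroup.fg_iff_add_fg, ← AddSubgroup.toIntSubmodule_toAddSubgroup
      (Subgroup.toAddSubgroup (CommGroup.torsion A)), ← Submodule.fg_iff_addSubgroup_fg]
    exact IsNoetherian.noetherian _
  have : Group.FG (CommGroup.torsion A) := (Group.fg_iff_subgroup_fg _).2 hfg
  have hf : Finite (CommGroup.torsion A) :=
    CommGroup.finite_of_fg_isMulTorsion _ (fun x => by
      have h := x.2
      rw [CommGroup.mem_torsion, isOfFinOrder_iff_pow_eq_one] at h
      rw [isOfFinOrder_iff_pow_eq_one]
      obtain ⟨n, hn, h⟩ := h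
      exact ⟨n, hn, Subtype.ext h⟩)
  refine ⟨Nat.card (CommGroup.torsion A), Nat.card_pos, fun x hx => ?_⟩
  have := pow_card_eq_one' (x := (⟨x, hx⟩ : CommGroup.torsion A))
  exact congrArg Subtype.val this

lemma unit_single {R M : Type*} [CommRing R] [IsDomain R] [CommGroup M] [TwoUniqueProds M]
    (P Q : MonoidAlgebra R M) (h : P * Q = 1) :
    ∃ l p, IsUnit p ∧ P = MonoidAlgebra.single l p := by
  classical
  have hP : P ≠ 0 := by rintro rfl; simp at h
  have hQ : Q ≠ 0 := by rintro rfl; simp at h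
  have hPs : P.coeff.support.Nonempty := by
    rw [Finsupp.support_nonempty_iff]; exact fun h => hP (MonoidAlgebra.coeff_eq_zero.1 h)
  have hQs : Q.coeff.support.Nonempty := by
    rw [Finsupp.support_nonempty_iff]; exact fun h => hQ (MonoidAlgebra.coeff_eq_zero.1 h)
  have hcard : ¬ 1 < P.coeff.support.card * Q.coeff.support.card := by
    intro hc
    obtain ⟨x, hx, y, hy, hne, ux, uy⟩ := TwoUniqueProds.uniqueMul_of_one_lt_card hc
    have key : ∀ z ∈ P.coeff.support ×ˢ Q.coeff.support,
        UniqueMul P.coeff.support Q.coeff.support z.1 z.2 → z.1 * z.2 = 1 := by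
      intro z hz uz
      have h1 := MonoidAlgebra.coeff_mul_mul_of_uniqueMul uz
      rw [h] at h1
      rw [Finset.mem_product, Finsupp.mem_support_iff, Finsupp.mem_support_iff] at hz
      by_contra hz1
      rw [MonoidAlgebra.one_def, MonoidAlgebra.coeff_single,
        Finsupp.single_eq_of_ne hz1] at h1
      exact mul_ne_zero hz.1 hz.2 h1.symm
    have e : y.1 * y.2 = x.1 * x.2 := by rw [key x hx ux, key y hy uy]
    rw [Finset.mem_product] at hy
    have := ux hy.1 hy.2 e
    exact hne (Prod.ext this.1.symm this.2.symm)
  have h1 := hPs.card_pos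
  have h2 := hQs.card_pos
  have hP1 : P.coeff.support.card = 1 := by nlinarith
  have hQ1 : Q.coeff.support.card = 1 := by nlinarith
  obtain ⟨l, p, -, hp⟩ := Finsupp.card_support_eq_one'.1 hP1
  obtain ⟨m, q, -, hq⟩ := Finsupp.card_support_eq_one'.1 hQ1
  have hp' : P = MonoidAlgebra.single l p := MonoidAlgebra.ext (by rw [hp]; rfl)
  have hq' : Q = MonoidAlgebra.single m q := MonoidAlgebra.ext (by rw [hq]; rfl)
  refine ⟨l, p, ?_, hp'⟩
  rw [hp', hq', MonoidAlgebra.single_mul_single, MonoidAlgebra.one_def] at h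
  have h3 := congrArg (fun x => x.coeff (l * m)) h
  simp only [MonoidAlgebra.coeff_single, Finsupp.single_eq_same] at h3
  by_cases hlm : (1 : M) = l * m
  · rw [← hlm, Finsupp.single_eq_same] at h3
    exact IsUnit.of_mul_eq_one _ h3
  · rw [Finsupp.single_eq_of_ne (Ne.symm hlm)] at h3
    have h4 := congrArg (fun x => x.coeff 1) h
    simp only [MonoidAlgebra.coeff_single, Finsupp.single_eq_same] at h4
    rw [Finsupp.single_eq_of_ne hlm] at h4
    exact absurd h4 zero_ne_one

lemma main_K [CharZero K] {u v : ℕ → K} (hu : u ∈ EP (Set.univ : Set Kˣ))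
    (hv : v ∈ EP (Set.univ : Set Kˣ)) (huv : ∀ n, (u n = 0 ∧ v n = 0) ∨ u n * v n = 1) :
    ∃ N : ℕ, 1 ≤ N ∧ ∀ b, ∃ c : K, c ≠ 0 ∧ ∀ n, u (b + N * (n + 1)) = c * u (b + N * n) := by
  classical
  obtain ⟨s, hs⟩ := exists_finset hu
  obtain ⟨s', hs'⟩ := exists_finset hv
  let A : Subgroup Kˣ := Subgroup.closure ((s ∪ s' : Finset Kˣ) : Set Kˣ)
  have hA : Group.FG A := Group.closure_finset_fg _
  obtain ⟨N, hN, hN'⟩ := torsion_exp A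
  let f : A →* Kˣ := (powMonoidHom N : Kˣ →* Kˣ).comp A.subtype
  let M : Subgroup Kˣ := f.range
  have hMfg : Group.FG M := Group.fg_range f
  have hMt : IsMulTorsionFree M := by
    rw [CommGroup.isMulTorsionFree_iff_torsion_eq_bot, eq_bot_iff]
    rintro ⟨x, y, rfl⟩ hx
    rw [CommGroup.mem_torsion, isOfFinOrder_iff_pow_eq_one] at hx
    obtain ⟨k, hk, hk'⟩ := hx
    have h1 : ((y : Kˣ) ^ N) ^ k = 1 := congrArg Subtype.val hk'
    have h2 : IsOfFinOrder y := by
      rw [isOfFinOrder_iff_pow_eq_one]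
      refine ⟨N * k, by positivity, Subtype.ext ?_⟩
      rw [pow_mul]; exact h1
    rw [Subgroup.mem_bot]
    apply Subtype.ext
    have h3 : (y : Kˣ) ^ N = 1 := congrArg Subtype.val (hN' y h2)
    exact h3
  refine ⟨N, hN, fun b => ?_⟩
  have hsub : ∀ l ∈ (A : Set Kˣ), l ^ N ∈ (M : Set Kˣ) := fun l hl => ⟨⟨l, hl⟩, rfl⟩
  have huA : u ∈ EP (A : Set Kˣ) :=
    EP_mono (fun x hx => Subgroup.subset_closure (by simp_all)) hs
  have hvA : v ∈ EP (A : Set Kˣ) :=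
    EP_mono (fun x hx => Subgroup.subset_closure (by simp_all)) hs'
  obtain ⟨P, hP⟩ := mem_range_E M (prog N hsub b huA)
  obtain ⟨Q, hQ⟩ := mem_range_E M (prog N hsub b hvA)
  have hid : (P * Q) * (P * Q) = P * Q := by
    apply E_inj M
    rw [map_mul, map_mul, hP, hQ]
    ext n
    simp only [Pi.mul_apply]
    rcases huv (b + N * n) with h | h
    · rw [h.1]; simp
    · rw [h]; simp
  rcases (show P * Q = 1 ∨ P * Q = 0 by
      by_cases h0 : P * Q = 0
      · exact Or.inr h0
      · exact Or.inl (mul_left_cancel₀ h0 (by rw [hid, mul_one]))) with h | h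
  · obtain ⟨l, p, hp, hPs⟩ := unit_single P Q h
    obtain ⟨a, -, rfl⟩ := Polynomial.isUnit_iff.1 hp
    refine ⟨((l : Kˣ) : K), Units.ne_zero _, fun n => ?_⟩
    rw [hPs, E_single] at hP
    have e1 := congrFun hP n
    have e2 := congrFun hP (n + 1)
    rw [← e1, ← e2]
    simp [tm, pow_succ]
    ring
  · refine ⟨1, one_ne_zero, fun n => ?_⟩
    have h0 : ∀ n, u (b + N * n) = 0 := by
      intro n
      have := congrFun (congrArg (E M) h) n
      rw [map_mul, hP, hQ, map_zero] at this
      rcases huv (b + N * n) with h | h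
      · exact h.1
      · simp [h] at this
    rw [h0, h0, mul_zero]

lemma exists_rec {F : Type*} [Field F] (g : ℕ → F)
    (h : ∃ q p : F[X], q ≠ 0 ∧ (q : PowerSeries F) * PowerSeries.mk g = (p : PowerSeries F)) :
    ∃ (D : ℕ) (a : ℕ → F), a 0 ≠ 0 ∧ ∃ i0, ∀ n ≥ i0,
      ∑ i ∈ Finset.range (D + 1), a i * g (n + i) = 0 := by
  obtain ⟨q, p, hq, hqp⟩ := h
  refine ⟨q.natDegree, fun i => q.coeff (q.natDegree - i), ?_, p.natDegree + 1, fun n hn => ?_⟩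
  · simpa using hq
  · have h1 := congrArg (PowerSeries.coeff (q.natDegree + n)) hqp
    rw [PowerSeries.coeff_mul, Polynomial.coeff_coe,
      Polynomial.coeff_eq_zero_of_natDegree_lt (by omega),
      Finset.Nat.sum_antidiagonal_eq_sum_range_succ_mk] at h1
    simp only [Polynomial.coeff_coe, PowerSeries.coeff_mk] at h1
    rw [← Finset.sum_range_reflect, ← h1]
    apply Finset.sum_subset_zero_on_sdiff
    · intro x hx
      simp only [Finset.mem_range] at hx ⊢
      omega
    · intro x hx
      simp only [Finset.mem_sdiff, Finset.mem_range] at hx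
      rw [Polynomial.coeff_eq_zero_of_natDegree_lt (by omega), zero_mul]
    · intro x hx
      simp only [Finset.mem_range] at hx
      beta_reduce
      rw [show q.natDegree - (q.natDegree + 1 - 1 - x) = x by omega,
        show n + (q.natDegree + 1 - 1 - x) = q.natDegree + n - x by omega]

end

end EPaux

/-- Let `G` be a free abelian group (written multiplicatively), `ℤ[G]` its group ring (an
integral domain), and `F` its field of fractions.  If a power series `Σ gᵢ tⁱ ∈ F[[t]]`, all of
whose coefficients are `0` or elements of `G`, is rational over `F`, then there are an integer
`n ≥ 1`, an index `i₀` and a sequence `hᵢ ∈ G`, periodic with period `n`, such that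
`g_{i+n} = hᵢ · gᵢ` for all `i > i₀`. -/
theorem eventually_periodic_ratios_of_rational
    {G : Type*} [CommGroup G] [Module.Free ℤ (Additive G)]
    [IsDomain (MonoidAlgebra ℤ G)]
    (g : ℕ → FractionRing (MonoidAlgebra ℤ G))
    (hΘ : ∀ i, g i = 0 ∨ ∃ γ : G, g i =
      algebraMap (MonoidAlgebra ℤ G) (FractionRing (MonoidAlgebra ℤ G))
        (MonoidAlgebra.of ℤ G γ))
    (hrat : ∃ q p : Polynomial (FractionRing (MonoidAlgebra ℤ G)), q ≠ 0 ∧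
      (q : PowerSeries (FractionRing (MonoidAlgebra ℤ G))) * PowerSeries.mk g =
        (p : PowerSeries (FractionRing (MonoidAlgebra ℤ G)))) :
    ∃ n : ℕ, 1 ≤ n ∧ ∃ i₀ : ℕ, ∃ h : ℕ → G,
      (∀ i, h (i + n) = h i) ∧
      ∀ i > i₀, g (i + n) =
        algebraMap (MonoidAlgebra ℤ G) (FractionRing (MonoidAlgebra ℤ G))
          (MonoidAlgebra.of ℤ G (h i)) * g i := by
  classical
  let K := AlgebraicClosure (FractionRing (MonoidAlgebra ℤ G))
  have hcR : CharZero (MonoidAlgebra ℤ G) := by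
    have hinj : Function.Injective (algebraMap ℤ (MonoidAlgebra ℤ G)) := by
      intro x y hxy
      have h1 := congrArg (fun z : MonoidAlgebra ℤ G => z.coeff 1) hxy
      simpa only [MonoidAlgebra.coe_algebraMap, Function.comp_apply, Algebra.algebraMap_self,
        RingHom.id_apply, MonoidAlgebra.coeff_single, Finsupp.single_eq_same] using h1
    exact charZero_of_injective_algebraMap hinj
  have hcF : CharZero (FractionRing (MonoidAlgebra ℤ G)) := charZero_of_injective_algebraMap (IsFractionRing.injective (MonoidAlgebra ℤ G) (FractionRing (MonoidAlgebra ℤ G)))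
  have hcK : CharZero K := charZero_of_injective_algebraMap (algebraMap (FractionRing (MonoidAlgebra ℤ G)) K).injective
  obtain ⟨D, a, ha, i0, hrec⟩ := EPaux.exists_rec g hrat
  -- the inversion automorphism
  let e : (MonoidAlgebra ℤ G) ≃+* (MonoidAlgebra ℤ G) := MonoidAlgebra.mapDomainRingEquiv ℤ (MulEquiv.inv G)
  let τ : (FractionRing (MonoidAlgebra ℤ G)) ≃+* (FractionRing (MonoidAlgebra ℤ G)) := IsFractionRing.ringEquivOfRingEquiv e
  have hτ : ∀ γ : G, τ (algebraMap (MonoidAlgebra ℤ G) (FractionRing (MonoidAlgebra ℤ G)) (MonoidAlgebra.of ℤ G γ)) =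
      algebraMap (MonoidAlgebra ℤ G) (FractionRing (MonoidAlgebra ℤ G)) (MonoidAlgebra.of ℤ G γ⁻¹) := by
    intro γ
    rw [IsFractionRing.ringEquivOfRingEquiv_algebraMap]
    simp [e]
  let φ : (FractionRing (MonoidAlgebra ℤ G)) →+* K := algebraMap (FractionRing (MonoidAlgebra ℤ G)) K
  let ψ : (FractionRing (MonoidAlgebra ℤ G)) →+* K := φ.comp τ.toRingHom
  have hmem : ∀ χ : (FractionRing (MonoidAlgebra ℤ G)) →+* K, (fun n => χ (g (i0 + n))) ∈ EPaux.EP (Set.univ : Set Kˣ) := by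
    intro χ
    refine EPaux.mem_of_rec D (fun i => χ (a i)) ?_ _ fun n => ?_
    · exact (map_ne_zero χ).2 ha
    · have := congrArg χ (hrec (i0 + n) (by omega))
      rw [map_sum, map_zero] at this
      rw [← this]
      refine Finset.sum_congr rfl fun i _ => ?_
      rw [map_mul, add_assoc]
  have hne : ∀ γ : G, algebraMap (MonoidAlgebra ℤ G) (FractionRing (MonoidAlgebra ℤ G)) (MonoidAlgebra.of ℤ G γ) ≠ 0 := by
    intro γ h
    have h1 : algebraMap (MonoidAlgebra ℤ G) (FractionRing (MonoidAlgebra ℤ G)) (MonoidAlgebra.of ℤ G γ) * algebraMap (MonoidAlgebra ℤ G) (FractionRing (MonoidAlgebra ℤ G)) (MonoidAlgebra.of ℤ G γ⁻¹)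
        = 1 := by
      rw [← map_mul, ← map_mul, mul_inv_cancel, map_one, map_one]
    rw [h, zero_mul] at h1
    exact zero_ne_one h1
  obtain ⟨N, hN, hmain⟩ := EPaux.main_K (hmem φ) (hmem ψ) (by
    intro n
    rcases hΘ (i0 + n) with h | ⟨γ, h⟩
    · left; simp [h]
    · right
      show φ (g (i0 + n)) * φ (τ (g (i0 + n))) = 1
      rw [h, hτ, ← map_mul, ← map_mul, ← map_mul, mul_inv_cancel, map_one, map_one, map_one])
  have hstep : ∀ b, ∃ h : G, ∀ n, g (i0 + (b + N * (n + 1))) =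
      algebraMap (MonoidAlgebra ℤ G) (FractionRing (MonoidAlgebra ℤ G)) (MonoidAlgebra.of ℤ G h) * g (i0 + (b + N * n)) := by
    intro b
    obtain ⟨c, hc, hcn⟩ := hmain b
    rcases hΘ (i0 + (b + N * 0)) with h0 | ⟨γ, hγ⟩
    · have hz : ∀ n, g (i0 + (b + N * n)) = 0 := by
        intro n
        induction n with
        | zero => exact h0
        | succ n ih =>
          have := hcn n
          rw [ih, map_zero, mul_zero] at this
          exact (map_eq_zero φ).1 this
      exact ⟨1, fun n => by rw [hz, hz, mul_zero]⟩
    · have h1 := hcn 0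
      rw [hγ] at h1
      rcases hΘ (i0 + (b + N * (0 + 1))) with h0 | ⟨γ', hγ'⟩
      · rw [h0, map_zero] at h1
        exact absurd h1.symm (mul_ne_zero hc ((map_ne_zero φ).2 (hne γ)))
      · rw [hγ'] at h1
        have hcc : c = φ (algebraMap (MonoidAlgebra ℤ G) (FractionRing (MonoidAlgebra ℤ G)) (MonoidAlgebra.of ℤ G (γ' * γ⁻¹))) := by
          apply mul_right_cancel₀ ((map_ne_zero φ).2 (hne γ))
          rw [← h1, ← map_mul, ← map_mul, ← map_mul, inv_mul_cancel_right]
        refine ⟨γ' * γ⁻¹, fun n => φ.injective ?_⟩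
        rw [map_mul, ← hcc]
        exact hcn n
  choose H hH using hstep
  refine ⟨N, hN, N * i0 + N, fun i => H (i % N + (N - 1) * i0), fun i => by simp, fun i hi => ?_⟩
  have hq : i0 ≤ i / N := by
    rw [Nat.le_div_iff_mul_le (by omega)]
    nlinarith
  obtain ⟨k, hk⟩ := Nat.exists_eq_add_of_le hq
  obtain ⟨N', rfl⟩ := Nat.exists_eq_add_of_le hN
  have hi2 := Nat.mod_add_div i (1 + N')
  have e1 : i0 + (i % (1 + N') + (1 + N' - 1) * i0 + (1 + N') * k) = i := by
    rw [hk] at hi2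
    rw [Nat.add_sub_cancel_left]
    nlinarith
  have e2 : i0 + (i % (1 + N') + (1 + N' - 1) * i0 + (1 + N') * (k + 1)) = i + (1 + N') := by
    rw [mul_add, mul_one, ← add_assoc, ← add_assoc, add_assoc i0, e1]
  have := hH (i % (1 + N') + (1 + N' - 1) * i0) k
  rw [e1, e2] at this
  exact this
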